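/- Lemma 1: There exists a constant C₁ > 0 such that for all sufficiently small γ > 0, (E_g[Z(Y)²] − E_g[T(Y)²]) / E_g[Z(Y)²] ≤ C₁ √(log(1/γ)) √(P₁ − P₂), where P₁ = P_g(exp(Y₁) ≤ γ) = 1/2 and P₂ = P_g(Σᵢ exp(Yᵢ) ≤ γ). -/

import Mathlib

open MeasureTheory Matrix Real Filter

noncomputable def mvnPdf {n : ℕ} (m : Fin n → ℝ) (S : Matrix (Fin n) (Fin n) ℝ)
    (y : Fin n → ℝ) : ℝ :=
  Real.exp (-(1/2) * ((y - m) ⬝ᵥ S⁻¹.mulVec (y - m))) / Real.sqrt ((2 * Real.pi) ^ n * S.det)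

noncomputable def stdNormCDF (x : ℝ) : ℝ :=
  ∫ t in Set.Iic x, Real.exp (-t ^ 2 / 2) / Real.sqrt (2 * Real.pi)

/-
Writing `t = (log γ - μᵢ) / Σᵢᵢ`, the importance-sampling mean is `μ + t Σ eᵢ`, and the likelihood
ratio is an exponential of the single coordinate `yᵢ`: `L² = κ exp (-2t (yᵢ - log γ))`. Under `g`
the coordinate `yᵢ` is a Gaussian centred at `log γ`, so everything is about a one-dimensional
Gaussian on the half-line below its mean. Cauchy–Schwarz bounds the second moment lost on `{Z ≠ T}`
by `√(∫ L⁴) √(P₁ - P₂)`, the integrals of `exp (b (u - log γ))` over that half-line are of order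
`1 / b`, and `b = -2t` is of order `log (1 / γ)`.
-/

open ProbabilityTheory Topology
open scoped MatrixOrder NNReal

section CauchySchwarz

variable {α : Type*} [MeasurableSpace α] {μ : Measure α} {s T : Set α} {f : α → ℝ}

lemma setIntegral_le_sqrt_mul_sqrt_measureReal (hs : μ s ≠ ⊤) (hf : 0 ≤ᵐ[μ.restrict s] f)
    (hf2 : MemLp f 2 (μ.restrict s)) :
    ∫ x in s, f x ∂μ ≤ √(∫ x in s, f x ^ 2 ∂μ) * √(μ.real s) := by
  have : IsFiniteMeasure (μ.restrict s) := isFiniteMeasure_restrict.mpr hs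
  have hHolder := integral_mul_le_Lp_mul_Lq_of_nonneg Real.HolderConjugate.two_two hf
    (ae_of_all _ fun _ => zero_le_one) (by simpa using hf2) (memLp_const (1 : ℝ))
  simpa [Real.sqrt_eq_rpow] using hHolder

lemma setIntegral_sub_div_le_sqrt (hT : MeasurableSet T) (hTs : T ⊆ s) [IsFiniteMeasure μ]
    (hf : 0 ≤ f) (hf2 : MemLp f 2 (μ.restrict s)) :
    (∫ x in s, f x ∂μ - ∫ x in T, f x ∂μ) / ∫ x in s, f x ∂μ ≤
      √(∫ x in s, f x ^ 2 ∂μ) / (∫ x in s, f x ∂μ) * √(μ.real s - μ.real T) := by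
  have hsub : s \ T ⊆ s := Set.sdiff_subset
  have hlost : ∫ x in s \ T, f x ∂μ ≤ √(∫ x in s, f x ^ 2 ∂μ) * √(μ.real (s \ T)) :=
    calc ∫ x in s \ T, f x ∂μ
        ≤ √(∫ x in s \ T, f x ^ 2 ∂μ) * √(μ.real (s \ T)) :=
          setIntegral_le_sqrt_mul_sqrt_measureReal (measure_ne_top _ _) (ae_of_all _ hf)
            (hf2.mono_measure (Measure.restrict_mono_set μ hsub))
      _ ≤ √(∫ x in s, f x ^ 2 ∂μ) * √(μ.real (s \ T)) := by
          gcongr ?_ * _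
          exact Real.sqrt_le_sqrt <| setIntegral_mono_set hf2.integrable_sq
            (ae_of_all _ fun x => sq_nonneg (f x)) hsub.eventuallyLE
  rw [← setIntegral_sdiff hT (hf2.integrable one_le_two) hTs, ← measureReal_sdiff hTs hT,
    div_mul_eq_mul_div]
  exact div_le_div_of_nonneg_right hlost (integral_nonneg hf)

end CauchySchwarz

section RealGaussian

variable {v : ℝ≥0}

lemma gaussianReal_real_Iic_mean (μ : ℝ) (hv : v ≠ 0) :
    (gaussianReal μ v).real (Set.Iic μ) = 1 / 2 := by
  have : NullSingletonClass (gaussianReal μ v) := nullSingletonClass_gaussianReal hv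
  have hreflect : (gaussianReal μ v).real (Set.Ioi μ) = (gaussianReal μ v).real (Set.Iic μ) := by
    have hmap : (gaussianReal μ v).map (fun x => 2 * μ - x) = gaussianReal μ v := by
      rw [gaussianReal_map_const_sub]
      ring_nf
    have hpre : (fun x => 2 * μ - x) ⁻¹' Set.Iic μ = Set.Ici μ := by
      ext x
      simp only [Set.mem_preimage, Set.mem_Iic, Set.mem_Ici]
      constructor <;> intro h <;> linarith
    conv_rhs => rw [← hmap]
    rw [map_measureReal_apply (by fun_prop) measurableSet_Iic, hpre,
      measureReal_congr Ioi_ae_eq_Ici]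
  have htotal := probReal_add_probReal_compl (μ := gaussianReal μ v) (measurableSet_Iic (a := μ))
  rw [Set.compl_Iic, hreflect] at htotal
  linarith

lemma setIntegral_gaussianReal_eq_setIntegral_mul (μ : ℝ) (hv : v ≠ 0) {s : Set ℝ}
    (hs : MeasurableSet s) (f : ℝ → ℝ) :
    ∫ u in s, f u ∂gaussianReal μ v = ∫ u in s, gaussianPDFReal μ v u * f u := by
  rw [gaussianReal_of_var_ne_zero _ hv, setIntegral_withDensity_eq_setIntegral_toReal_smul
    (measurable_gaussianPDF μ v) (ae_of_all _ fun _ => gaussianPDF_lt_top) _ hs]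
  simp only [toReal_gaussianPDF, smul_eq_mul]

lemma gaussianPDFReal_le_gaussianPDFReal (v : ℝ≥0) {μ μ' x y : ℝ} (h : |x - μ| ≤ |y - μ'|) :
    gaussianPDFReal μ' v y ≤ gaussianPDFReal μ v x := by
  have hsq : (x - μ) ^ 2 ≤ (y - μ') ^ 2 := sq_le_sq.mpr h
  unfold gaussianPDFReal
  gcongr

lemma setIntegral_Iic_exp_mul_sub {b : ℝ} (hb : 0 < b) (μ : ℝ) :
    ∫ u in Set.Iic μ, rexp (b * (u - μ)) = 1 / b := by
  have hsplit (u : ℝ) : rexp (b * (u - μ)) = rexp (b * u) * (rexp (b * μ))⁻¹ := by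
    rw [mul_sub, Real.exp_sub, div_eq_mul_inv]
  simp_rw [hsplit, integral_mul_const, integral_exp_mul_Iic hb]
  field_simp

lemma integrableOn_Iic_exp_mul_sub {b : ℝ} (hb : 0 < b) (μ : ℝ) :
    IntegrableOn (fun u => rexp (b * (u - μ))) (Set.Iic μ) :=
  .of_integral_ne_zero (by rw [setIntegral_Iic_exp_mul_sub hb]; positivity)

lemma setIntegral_exp_gaussianReal_le (μ : ℝ) (hv : v ≠ 0) {b : ℝ} (hb : 0 < b) :
    ∫ u in Set.Iic μ, rexp (b * (u - μ)) ∂gaussianReal μ v ≤ gaussianPDFReal 0 v 0 / b :=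
  calc ∫ u in Set.Iic μ, rexp (b * (u - μ)) ∂gaussianReal μ v
      = ∫ u in Set.Iic μ, gaussianPDFReal μ v u * rexp (b * (u - μ)) :=
        setIntegral_gaussianReal_eq_setIntegral_mul μ hv measurableSet_Iic _
    _ ≤ ∫ u in Set.Iic μ, gaussianPDFReal 0 v 0 * rexp (b * (u - μ)) := by
        refine integral_mono_of_nonneg
          (ae_of_all _ fun u => mul_nonneg (gaussianPDFReal_nonneg _ _ _) (Real.exp_pos _).le)
          ((integrableOn_Iic_exp_mul_sub hb μ).const_mul _)
          (ae_of_all _ fun u => mul_le_mul_of_nonneg_right ?_ (Real.exp_pos _).le)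
        exact gaussianPDFReal_le_gaussianPDFReal v (by simp)
    _ = gaussianPDFReal 0 v 0 / b := by
        rw [integral_const_mul, setIntegral_Iic_exp_mul_sub hb, mul_one_div]

lemma integrableOn_gaussianPDFReal_mul_exp (μ : ℝ) (v : ℝ≥0) {b : ℝ} (hb : 0 < b) :
    IntegrableOn (fun u => gaussianPDFReal μ v u * rexp (b * (u - μ))) (Set.Iic μ) := by
  refine (integrableOn_Iic_exp_mul_sub hb μ).bdd_mul (c := gaussianPDFReal 0 v 0)
    (by fun_prop) (ae_of_all _ fun u => ?_)
  rw [Real.norm_of_nonneg (gaussianPDFReal_nonneg _ _ _)]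
  exact gaussianPDFReal_le_gaussianPDFReal v (by simp)

-- The window `[μ - 1/b, μ]` already carries mass of order `1/b`.
lemma le_setIntegral_exp_gaussianReal (μ : ℝ) (hv : v ≠ 0) {b : ℝ} (hb : 1 ≤ b) :
    gaussianPDFReal 0 v 1 * rexp (-1) / b ≤
      ∫ u in Set.Iic μ, rexp (b * (u - μ)) ∂gaussianReal μ v := by
  have hb0 : 0 < b := one_pos.trans_le hb
  have hint := integrableOn_gaussianPDFReal_mul_exp μ v hb0
  have hwindow : Set.Icc (μ - 1 / b) μ ⊆ Set.Iic μ := Set.Icc_subset_Iic_self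
  calc gaussianPDFReal 0 v 1 * rexp (-1) / b
      = ∫ _ in Set.Icc (μ - 1 / b) μ, gaussianPDFReal 0 v 1 * rexp (-1) := by
        simp [Real.volume_real_Icc, hb0.le, div_eq_inv_mul]
    _ ≤ ∫ u in Set.Icc (μ - 1 / b) μ, gaussianPDFReal μ v u * rexp (b * (u - μ)) := by
        refine setIntegral_mono_on (integrableOn_const (by simp)) (hint.mono_set hwindow)
          measurableSet_Icc fun u ⟨hlow, hup⟩ => ?_
        have hb1 : 1 / b ≤ 1 := (div_le_one hb0).mpr hb
        have hpdf : gaussianPDFReal 0 v 1 ≤ gaussianPDFReal μ v u :=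
          gaussianPDFReal_le_gaussianPDFReal v <| by
            rw [sub_zero, abs_one, abs_le]
            constructor <;> linarith
        have hexp : -1 ≤ b * (u - μ) :=
          calc -1 = b * -(1 / b) := by field_simp
            _ ≤ b * (u - μ) := by gcongr; linarith
        exact mul_le_mul hpdf (Real.exp_le_exp.mpr hexp) (Real.exp_pos _).le
          (gaussianPDFReal_nonneg _ _ _)
    _ ≤ ∫ u in Set.Iic μ, gaussianPDFReal μ v u * rexp (b * (u - μ)) :=
        setIntegral_mono_set hint
          (ae_of_all _ fun u => mul_nonneg (gaussianPDFReal_nonneg _ _ _) (Real.exp_pos _).le)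
          hwindow.eventuallyLE
    _ = ∫ u in Set.Iic μ, rexp (b * (u - μ)) ∂gaussianReal μ v :=
        (setIntegral_gaussianReal_eq_setIntegral_mul μ hv measurableSet_Iic _).symm

lemma exists_sqrt_setIntegral_exp_sq_div_le (hv : v ≠ 0) :
    ∃ K : ℝ, 0 < K ∧ ∀ μ b : ℝ, 1 ≤ b →
      √(∫ u in Set.Iic μ, rexp (b * (u - μ)) ^ 2 ∂gaussianReal μ v) /
        (∫ u in Set.Iic μ, rexp (b * (u - μ)) ∂gaussianReal μ v) ≤ K * √b := by
  set p := gaussianPDFReal 0 v 1 * rexp (-1)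
  set q := gaussianPDFReal 0 v 0 / 2
  have hp : 0 < p := mul_pos (gaussianPDFReal_pos _ _ _ hv) (Real.exp_pos _)
  have hq : 0 < q := half_pos (gaussianPDFReal_pos _ _ _ hv)
  refine ⟨√q / p, by positivity, fun μ b hb => ?_⟩
  have hb0 : 0 < b := one_pos.trans_le hb
  have hsq : ∫ u in Set.Iic μ, rexp (b * (u - μ)) ^ 2 ∂gaussianReal μ v ≤ q / b := by
    have hdouble (u : ℝ) : rexp (b * (u - μ)) ^ 2 = rexp (2 * b * (u - μ)) := by
      rw [← Real.exp_nat_mul, Nat.cast_two, mul_assoc]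
    simp_rw [hdouble]
    exact (setIntegral_exp_gaussianReal_le μ hv (mul_pos two_pos hb0)).trans_eq (div_div _ _ _).symm
  calc _ ≤ √(q / b) / (p / b) := by
        gcongr
        exact le_setIntegral_exp_gaussianReal μ hv hb
    _ = √q / p * √b := by
        rw [Real.sqrt_div hq.le, div_div_div_eq, mul_comm (√b) p, mul_div_mul_comm, Real.div_sqrt]

end RealGaussian

section MultivariateGaussian

variable {n : ℕ}

lemma pi_gaussianReal_eq_withDensity (n : ℕ) :
    Measure.pi (fun _ : Fin n => gaussianReal 0 1) =
      volume.withDensity (fun x => ENNReal.ofReal (∏ i, gaussianPDFReal 0 1 (x i))) := by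
  refine Measure.pi_eq fun s hs => ?_
  rw [withDensity_apply _ (MeasurableSet.univ_pi hs), volume_pi, Measure.restrict_pi_pi,
    ← ofReal_integral_eq_lintegral_ofReal
      (Integrable.fintype_prod fun _ => (integrable_gaussianPDFReal 0 1).restrict)
      (ae_of_all _ fun x => Finset.prod_nonneg fun i _ => gaussianPDFReal_nonneg 0 1 (x i)),
    integral_fintype_prod_eq_prod,
    ENNReal.ofReal_prod_of_nonneg fun i _ => integral_nonneg (gaussianPDFReal_nonneg 0 1)]
  exact Finset.prod_congr rfl fun i _ =>
    (gaussianReal_apply_eq_integral 0 one_ne_zero (s i)).symm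

lemma prod_gaussianPDFReal_zero_one (x : Fin n → ℝ) :
    ∏ i, gaussianPDFReal 0 1 (x i) = rexp (-(1 / 2) * (x ⬝ᵥ x)) / √(2 * π) ^ n := by
  have hexponent : ∑ i, -x i ^ 2 / 2 = -(1 / 2) * (x ⬝ᵥ x) := by
    simp only [dotProduct, Finset.mul_sum]
    exact Finset.sum_congr rfl fun i _ => by ring
  simp only [gaussianPDFReal, Finset.prod_mul_distrib, ← Real.exp_sum, Finset.prod_const,
    Finset.card_univ, Fintype.card_fin, NNReal.coe_one, mul_one, sub_zero, hexponent, inv_pow]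
  exact (div_eq_inv_mul _ _).symm

lemma abs_det_mul_mvnPdf_add_mulVec (c : Fin n → ℝ) {S B : Matrix (Fin n) (Fin n) ℝ}
    (hBS : B * Bᵀ = S) (hB : B.det ≠ 0) (x : Fin n → ℝ) :
    |B.det| * mvnPdf c S (c + B *ᵥ x) = ∏ i, gaussianPDFReal 0 1 (x i) := by
  have hquad : (B *ᵥ x) ⬝ᵥ S⁻¹ *ᵥ (B *ᵥ x) = x ⬝ᵥ x := by
    have hcancel : S⁻¹ *ᵥ (B *ᵥ x) = x ᵥ* B⁻¹ := by
      rw [← hBS, Matrix.mul_inv_rev, mulVec_mulVec, Matrix.mul_assoc,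
        Matrix.nonsing_inv_mul _ hB.isUnit, Matrix.mul_one, ← transpose_nonsing_inv,
        mulVec_transpose]
    rw [hcancel, dotProduct_comm, ← dotProduct_mulVec, mulVec_mulVec,
      Matrix.nonsing_inv_mul _ hB.isUnit, one_mulVec]
  have hnorm : √((2 * π) ^ n * S.det) = √(2 * π) ^ n * |B.det| := by
    rw [← hBS, det_mul, det_transpose, Real.sqrt_mul (by positivity), Real.sqrt_mul_self_eq_abs]
    congr 1
    rw [Real.sqrt_eq_iff_mul_self_eq (by positivity) (by positivity), ← mul_pow,
      Real.mul_self_sqrt (by positivity)]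
  have habs : |B.det| ≠ 0 := abs_ne_zero.mpr hB
  rw [prod_gaussianPDFReal_zero_one, mvnPdf, add_sub_cancel_left, hquad, hnorm]
  field_simp

lemma mvnPdf_nonneg (c : Fin n → ℝ) (S : Matrix (Fin n) (Fin n) ℝ) (y : Fin n → ℝ) :
    0 ≤ mvnPdf c S y := by
  unfold mvnPdf
  positivity

@[fun_prop]
lemma continuous_mvnPdf (c : Fin n → ℝ) (S : Matrix (Fin n) (Fin n) ℝ) :
    Continuous (mvnPdf c S) := by
  unfold mvnPdf
  fun_prop

/-- The measure on `Fin n → ℝ` with Lebesgue density `mvnPdf c S`. For positive definite `S` it is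
the Gaussian law with mean `c` and covariance matrix `S`, here on the plain function space, where
Mathlib's `multivariateGaussian` lives on `EuclideanSpace`. -/
noncomputable def mvnMeasure (c : Fin n → ℝ) (S : Matrix (Fin n) (Fin n) ℝ) :
    Measure (Fin n → ℝ) :=
  volume.withDensity fun y => ENNReal.ofReal (mvnPdf c S y)

lemma setIntegral_mvnMeasure (c : Fin n → ℝ) (S : Matrix (Fin n) (Fin n) ℝ)
    {s : Set (Fin n → ℝ)} (hs : MeasurableSet s) (f : (Fin n → ℝ) → ℝ) :
    ∫ y in s, f y ∂mvnMeasure c S = ∫ y in s, mvnPdf c S y * f y := by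
  rw [mvnMeasure, setIntegral_withDensity_eq_setIntegral_toReal_smul (by fun_prop)
    (ae_of_all _ fun _ => ENNReal.ofReal_lt_top) _ hs]
  simp only [ENNReal.toReal_ofReal (mvnPdf_nonneg _ _ _), smul_eq_mul]

lemma measureReal_mvnMeasure (c : Fin n → ℝ) (S : Matrix (Fin n) (Fin n) ℝ)
    {s : Set (Fin n → ℝ)} (hs : MeasurableSet s) :
    (mvnMeasure c S).real s = ∫ y in s, mvnPdf c S y := by
  simpa using setIntegral_mvnMeasure c S hs fun _ => 1

lemma map_add_mulVec_volume (c : Fin n → ℝ) {B : Matrix (Fin n) (Fin n) ℝ} (hB : B.det ≠ 0) :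
    ENNReal.ofReal |B.det| • (volume : Measure (Fin n → ℝ)).map (fun x => c + B *ᵥ x) =
      volume := by
  have hcomp : (fun x => c + B *ᵥ x) = (fun x => c + x) ∘ toLin' B := by
    ext x
    simp
  have hlin : Measurable (toLin' B) := (LinearMap.continuous_on_pi _).measurable
  rw [hcomp, ← Measure.map_map (measurable_const_add c) hlin,
    map_matrix_volume_pi_eq_smul_volume_pi hB, Measure.map_smul, map_add_left_eq_self, smul_smul,
    ← ENNReal.ofReal_mul (abs_nonneg _), ← abs_mul, mul_inv_cancel₀ hB, abs_one,
    ENNReal.ofReal_one, one_smul]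

lemma mvnMeasure_eq_map_pi_gaussianReal (c : Fin n → ℝ) {S B : Matrix (Fin n) (Fin n) ℝ}
    (hBS : B * Bᵀ = S) (hB : B.det ≠ 0) :
    mvnMeasure c S =
      (Measure.pi (fun _ : Fin n => gaussianReal 0 1)).map (fun x => c + B *ᵥ x) := by
  have hmeas : Measurable (fun x => c + B *ᵥ x) := by fun_prop
  have hdens : Measurable fun y => ENNReal.ofReal (mvnPdf c S y) := by fun_prop
  have hcomp : Measurable fun x => ENNReal.ofReal (mvnPdf c S (c + B *ᵥ x)) := hdens.comp hmeas
  ext s hs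
  rw [mvnMeasure, withDensity_apply _ hs, ← map_add_mulVec_volume c hB, Measure.restrict_smul,
    lintegral_smul_measure, smul_eq_mul, setLIntegral_map hs hdens hmeas,
    Measure.map_apply hmeas hs, pi_gaussianReal_eq_withDensity, withDensity_apply _ (hmeas hs),
    ← lintegral_const_mul _ hcomp]
  refine lintegral_congr fun x => ?_
  rw [← ENNReal.ofReal_mul (abs_nonneg _), abs_det_mul_mvnPdf_add_mulVec c hBS hB]

variable {S : Matrix (Fin n) (Fin n) ℝ}

lemma mvnMeasure_eq_map_multivariateGaussian (c : Fin n → ℝ) (hS : S.PosDef) :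
    mvnMeasure c S = (multivariateGaussian (WithLp.toLp 2 c) S).map WithLp.ofLp := by
  have hsqrt : CFC.sqrt S * (CFC.sqrt S)ᵀ = S := by
    rw [← conjTranspose_eq_transpose_of_trivial, ← star_eq_conjTranspose,
      (CFC.sqrt_nonneg S).isSelfAdjoint.star_eq]
    exact CFC.sqrt_mul_sqrt_self S hS.posSemidef.nonneg
  have hdet : (CFC.sqrt S).det ≠ 0 := by
    have hpos := hS.det_pos
    rw [← hsqrt, det_mul] at hpos
    exact left_ne_zero_of_mul hpos.ne'
  rw [mvnMeasure_eq_map_pi_gaussianReal c hsqrt hdet, multivariateGaussian,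
    ← map_pi_eq_stdGaussian, Measure.map_map (by fun_prop) (by fun_prop),
    Measure.map_map (by fun_prop) (by fun_prop)]
  rfl

lemma isProbabilityMeasure_mvnMeasure (c : Fin n → ℝ) (hS : S.PosDef) :
    IsProbabilityMeasure (mvnMeasure c S) := by
  rw [mvnMeasure_eq_map_multivariateGaussian c hS]
  exact Measure.isProbabilityMeasure_map (by fun_prop)

lemma measurePreserving_eval_mvnMeasure (c : Fin n → ℝ) (hS : S.PosDef) (i : Fin n) :
    MeasurePreserving (fun y => y i) (mvnMeasure c S)
      (gaussianReal (c i) (S i i).toNNReal) where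
  measurable := by fun_prop
  map_eq := by
    rw [mvnMeasure_eq_map_multivariateGaussian c hS, Measure.map_map (by fun_prop) (by fun_prop)]
    exact (measurePreserving_eval_multivariateGaussian hS.posSemidef).map_eq

lemma measurableSet_eval_le (i : Fin n) (a : ℝ) : MeasurableSet {y : Fin n → ℝ | y i ≤ a} :=
  measurableSet_le (by fun_prop) measurable_const

lemma setIntegral_mvnPdf_eval_le_mean (c : Fin n → ℝ) (hS : S.PosDef) (i : Fin n) :
    ∫ y in {y | y i ≤ c i}, mvnPdf c S y = 1 / 2 := by
  have hv : (S i i).toNNReal ≠ 0 := (Real.toNNReal_pos.mpr hS.diag_pos).ne'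
  calc ∫ y in {y | y i ≤ c i}, mvnPdf c S y
      = (mvnMeasure c S).real ((fun y => y i) ⁻¹' Set.Iic (c i)) :=
        (measureReal_mvnMeasure c S (measurableSet_eval_le i _)).symm
    _ = (gaussianReal (c i) (S i i).toNNReal).real (Set.Iic (c i)) :=
        (measurePreserving_eval_mvnMeasure c hS i).measureReal_preimage
          measurableSet_Iic.nullMeasurableSet
    _ = 1 / 2 := gaussianReal_real_Iic_mean (c i) hv

lemma exists_exp_eval_loss_le (hS : S.PosDef) (i : Fin n) :
    ∃ K : ℝ, 0 < K ∧ ∀ (c : Fin n → ℝ) (b : ℝ) (T : Set (Fin n → ℝ)), 1 ≤ b →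
      MeasurableSet T → T ⊆ {y | y i ≤ c i} →
      (∫ y in {y | y i ≤ c i}, rexp (b * (y i - c i)) ∂mvnMeasure c S -
          ∫ y in T, rexp (b * (y i - c i)) ∂mvnMeasure c S) /
        (∫ y in {y | y i ≤ c i}, rexp (b * (y i - c i)) ∂mvnMeasure c S) ≤
      K * √b * √((mvnMeasure c S).real {y | y i ≤ c i} - (mvnMeasure c S).real T) := by
  have hv : (S i i).toNNReal ≠ 0 := (Real.toNNReal_pos.mpr hS.diag_pos).ne'
  obtain ⟨K, hK, hbound⟩ := exists_sqrt_setIntegral_exp_sq_div_le hv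
  refine ⟨K, hK, fun c b T hb hT hTs => ?_⟩
  have := isProbabilityMeasure_mvnMeasure c hS
  have hlaw : MeasurePreserving (fun y => y i) ((mvnMeasure c S).restrict {y | y i ≤ c i})
      ((gaussianReal (c i) (S i i).toNNReal).restrict (Set.Iic (c i))) :=
    (measurePreserving_eval_mvnMeasure c hS i).restrict_preimage measurableSet_Iic
  have htransfer (f : ℝ → ℝ) (hf : Continuous f) :
      ∫ y in {y | y i ≤ c i}, f (y i) ∂mvnMeasure c S =
        ∫ u in Set.Iic (c i), f u ∂gaussianReal (c i) (S i i).toNNReal :=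
    hlaw.hasLaw.integral_comp hf.aestronglyMeasurable
  have hL2 : MemLp (fun y => rexp (b * (y i - c i))) 2
      ((mvnMeasure c S).restrict {y | y i ≤ c i}) := by
    refine MemLp.of_bound (Measurable.aestronglyMeasurable (by fun_prop)) 1 ?_
    filter_upwards [ae_restrict_mem (measurableSet_eval_le i (c i))] with y hy
    rw [Real.norm_of_nonneg (Real.exp_pos _).le, Real.exp_le_one_iff]
    exact mul_nonpos_of_nonneg_of_nonpos (by linarith) (sub_nonpos.mpr hy)
  refine (setIntegral_sub_div_le_sqrt hT hTs (fun y => (Real.exp_pos _).le) hL2).trans ?_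
  gcongr
  rw [htransfer (fun u => rexp (b * (u - c i)) ^ 2) (by fun_prop),
    htransfer (fun u => rexp (b * (u - c i))) (by fun_prop)]
  exact hbound (c i) b hb

end MultivariateGaussian

section LikelihoodRatio

variable {n : ℕ} {S : Matrix (Fin n) (Fin n) ℝ}

lemma mvnPdf_pos (c : Fin n → ℝ) (hS : S.PosDef) (y : Fin n → ℝ) : 0 < mvnPdf c S y := by
  have := hS.det_pos
  unfold mvnPdf
  positivity

lemma dotProduct_inv_mulVec_sub_smul_col (hS : S.PosDef) (i : Fin n) (t : ℝ) (w : Fin n → ℝ) :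
    (w - t • S.col i) ⬝ᵥ S⁻¹ *ᵥ (w - t • S.col i) =
      w ⬝ᵥ S⁻¹ *ᵥ w - 2 * t * w i + t ^ 2 * S i i := by
  have hsymm : (S⁻¹)ᵀ = S⁻¹ := by
    rw [← conjTranspose_eq_transpose_of_trivial, hS.isHermitian.inv.eq]
  have hinv : S⁻¹ *ᵥ S.col i = Pi.single i 1 := by
    rw [← mulVec_single_one, mulVec_mulVec, Matrix.nonsing_inv_mul _ hS.det_pos.ne'.isUnit,
      one_mulVec]
  have hcross : S.col i ⬝ᵥ S⁻¹ *ᵥ w = w i := by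
    rw [dotProduct_mulVec, ← mulVec_transpose, hsymm, hinv, single_one_dotProduct]
  simp only [mulVec_sub, mulVec_smul, hinv, sub_dotProduct, dotProduct_sub, smul_dotProduct,
    dotProduct_smul, hcross, dotProduct_single_one, smul_eq_mul, Pi.sub_apply, Pi.smul_apply,
    col_apply]
  ring

lemma mvnPdf_div_mvnPdf_add_smul_col (m : Fin n → ℝ) (hS : S.PosDef) (i : Fin n) (t : ℝ)
    (y : Fin n → ℝ) :
    mvnPdf m S y / mvnPdf (m + t • S.col i) S y =
      rexp (-t * (y i - (m + t • S.col i) i) - t ^ 2 * S i i / 2) := by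
  rw [div_eq_iff (mvnPdf_pos _ hS y).ne']
  simp only [mvnPdf, ← sub_sub]
  rw [dotProduct_inv_mulVec_sub_smul_col hS, ← mul_div_assoc, ← Real.exp_add]
  congr 2
  simp only [Pi.sub_apply, Pi.add_apply, Pi.smul_apply, col_apply, smul_eq_mul]
  ring

lemma integral_indicator_mul_likelihoodRatio_sq (m : Fin n → ℝ) (hS : S.PosDef) (i : Fin n)
    (t : ℝ) {s : Set (Fin n → ℝ)} (hs : MeasurableSet s) :
    ∫ y, s.indicator (fun _ => (1 : ℝ)) y *
        (mvnPdf m S y / mvnPdf (m + t • S.col i) S y) ^ 2 * mvnPdf (m + t • S.col i) S y =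
      rexp (-(t ^ 2 * S i i)) *
        ∫ y in s, rexp (-2 * t * (y i - (m + t • S.col i) i)) ∂mvnMeasure (m + t • S.col i) S := by
  rw [setIntegral_mvnMeasure _ S hs, ← integral_const_mul, ← integral_indicator hs]
  congr 1 with y
  by_cases hy : y ∈ s
  · have hsq : (mvnPdf m S y / mvnPdf (m + t • S.col i) S y) ^ 2 =
        rexp (-(t ^ 2 * S i i)) * rexp (-2 * t * (y i - (m + t • S.col i) i)) := by
      rw [mvnPdf_div_mvnPdf_add_smul_col m hS, ← Real.exp_nat_mul, ← Real.exp_add]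
      congr 1
      push_cast
      ring
    simp only [Set.indicator_of_mem hy, hsq]
    ring
  · simp only [Set.indicator_of_notMem hy, zero_mul]

lemma exists_secondMoment_loss_le (hS : S.PosDef) (i : Fin n) :
    ∃ K : ℝ, 0 < K ∧ ∀ (m : Fin n → ℝ) (t : ℝ) (T : Set (Fin n → ℝ)), 1 ≤ -2 * t →
      MeasurableSet T → T ⊆ {y | y i ≤ (m + t • S.col i) i} →
      let g := mvnPdf (m + t • S.col i) S
      let M := fun s : Set (Fin n → ℝ) =>
        ∫ y, s.indicator (fun _ => (1 : ℝ)) y * (mvnPdf m S y / g y) ^ 2 * g y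
      (M {y | y i ≤ (m + t • S.col i) i} - M T) / M {y | y i ≤ (m + t • S.col i) i} ≤
        K * √(-2 * t) *
          √((∫ y in {y | y i ≤ (m + t • S.col i) i}, g y) - ∫ y in T, g y) := by
  obtain ⟨K, hK, hbound⟩ := exists_exp_eval_loss_le hS i
  refine ⟨K, hK, fun m t T ht hT hTs => ?_⟩
  dsimp only
  have hs := measurableSet_eval_le i ((m + t • S.col i) i)
  rw [integral_indicator_mul_likelihoodRatio_sq m hS i t hs,
    integral_indicator_mul_likelihoodRatio_sq m hS i t hT, ← mul_sub,
    mul_div_mul_left _ _ (Real.exp_ne_zero _), ← measureReal_mvnMeasure _ S hs,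
    ← measureReal_mvnMeasure _ S hT]
  exact hbound _ _ T ht hT hTs

end LikelihoodRatio

lemma eventually_tilt_bounds {σ : ℝ} (hσ : 0 < σ) (a : ℝ) :
    ∀ᶠ γ in 𝓝[>] (0 : ℝ), 1 ≤ -2 * ((Real.log γ - a) / σ) ∧
      -2 * ((Real.log γ - a) / σ) ≤ 4 / σ * Real.log (1 / γ) := by
  filter_upwards [Real.tendsto_log_nhdsGT_zero.eventually_le_atBot (a - σ),
    Real.tendsto_log_nhdsGT_zero.eventually_le_atBot (-a)] with γ hσγ haγ
  rw [one_div, Real.log_inv]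
  constructor
  · rw [← mul_div_assoc, le_div_iff₀ hσ]
    linarith
  · rw [← mul_div_assoc, div_mul_eq_mul_div]
    exact div_le_div_of_nonneg_right (by linarith) hσ.le

lemma setOf_sum_exp_le_subset {ι : Type*} [Fintype ι] (i : ι) (γ : ℝ) :
    {y : ι → ℝ | ∑ j, rexp (y j) ≤ γ} ⊆ {y | rexp (y i) ≤ γ} := fun y hy =>
  (Finset.single_le_sum (f := fun j => rexp (y j)) (fun _ _ => (Real.exp_pos _).le)
    (Finset.mem_univ i)).trans hy

theorem stmt10_general {n : ℕ} (m : Fin n → ℝ) (S : Matrix (Fin n) (Fin n) ℝ) (hS : S.PosDef)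
    (i : Fin n) :
    let Λ : ℝ → Fin n → ℝ := fun γ k =>
      if k = i then Real.log γ - m i else S k i / S i i * (Real.log γ - m i)
    let g : ℝ → (Fin n → ℝ) → ℝ := fun γ y => mvnPdf (m + Λ γ) S y
    let L : ℝ → (Fin n → ℝ) → ℝ := fun γ y => mvnPdf m S y / g γ y
    let EZ2 : ℝ → ℝ := fun γ => ∫ y : Fin n → ℝ,
      Set.indicator {y : Fin n → ℝ | Real.exp (y i) ≤ γ} (fun _ => (1 : ℝ)) y *
        (L γ y) ^ 2 * g γ y
    let ET2 : ℝ → ℝ := fun γ => ∫ y : Fin n → ℝ,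
      Set.indicator {y : Fin n → ℝ | ∑ j, Real.exp (y j) ≤ γ} (fun _ => (1 : ℝ)) y *
        (L γ y) ^ 2 * g γ y
    let P1 : ℝ → ℝ := fun γ => ∫ y in {y : Fin n → ℝ | Real.exp (y i) ≤ γ}, g γ y
    let P2 : ℝ → ℝ := fun γ =>
      ∫ y in {y : Fin n → ℝ | ∑ j, Real.exp (y j) ≤ γ}, g γ y
    (∀ γ : ℝ, 0 < γ → P1 γ = 1 / 2) ∧
    ∃ C₁ : ℝ, 0 < C₁ ∧ ∀ᶠ γ in nhdsWithin (0 : ℝ) (Set.Ioi 0),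
      (EZ2 γ - ET2 γ) / EZ2 γ ≤
        C₁ * Real.sqrt (Real.log (1 / γ)) * Real.sqrt (P1 γ - P2 γ) := by
  intro Λ g L EZ2 ET2 P1 P2
  have hσ : 0 < S i i := hS.diag_pos
  set t : ℝ → ℝ := fun γ => (Real.log γ - m i) / S i i with ht
  have hmean (γ : ℝ) : m + Λ γ = m + t γ • S.col i := by
    ext k
    by_cases hk : k = i
    · subst hk
      simp [Λ, ht, hσ.ne']
    · simp only [Pi.add_apply, Λ, hk, if_false, ht, Pi.smul_apply, col_apply, smul_eq_mul]
      ring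
  have hhalf (γ : ℝ) (hγ : 0 < γ) :
      {y : Fin n → ℝ | Real.exp (y i) ≤ γ} = {y | y i ≤ (m + t γ • S.col i) i} := by
    have hcoord : (m + t γ • S.col i) i = Real.log γ := by simp [ht, hσ.ne']
    simp only [hcoord, Real.le_log_iff_exp_le hγ]
  obtain ⟨K, hK, hloss⟩ := exists_secondMoment_loss_le hS i
  refine ⟨fun γ hγ => ?_, K * √(4 / S i i), by positivity, ?_⟩
  · simp only [P1, g, hmean, hhalf γ hγ, setIntegral_mvnPdf_eval_le_mean _ hS]
  · filter_upwards [self_mem_nhdsWithin, eventually_tilt_bounds hσ (m i)]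
      with γ hγ ⟨htlow, htup⟩
    have hT : MeasurableSet {y : Fin n → ℝ | ∑ j, Real.exp (y j) ≤ γ} :=
      measurableSet_le (by fun_prop) measurable_const
    simp only [EZ2, ET2, P1, P2, L, g, hmean, hhalf γ hγ]
    refine (hloss m (t γ) _ htlow hT (hhalf γ hγ ▸ setOf_sum_exp_le_subset i γ)).trans ?_
    rw [mul_assoc K (√(4 / S i i)), ← Real.sqrt_mul (by positivity)]
    gcongr

theorem stmt10 {n : ℕ} (m : Fin (n + 1) → ℝ) (S : Matrix (Fin (n + 1)) (Fin (n + 1)) ℝ)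
    (hS : S.PosDef)
    (hA : ∀ j : Fin (n + 1), j ≠ 0 →
      Real.sqrt (S 0 0) < S 0 j / Real.sqrt (S 0 0 * S j j) * Real.sqrt (S j j)) :
    let Λ : ℝ → Fin (n + 1) → ℝ := fun γ k =>
      if k = 0 then Real.log γ - m 0 else S k 0 / S 0 0 * (Real.log γ - m 0)
    let g : ℝ → (Fin (n + 1) → ℝ) → ℝ := fun γ y => mvnPdf (m + Λ γ) S y
    let L : ℝ → (Fin (n + 1) → ℝ) → ℝ := fun γ y => mvnPdf m S y / g γ y
    let EZ2 : ℝ → ℝ := fun γ => ∫ y : Fin (n + 1) → ℝ,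
      Set.indicator {y : Fin (n + 1) → ℝ | Real.exp (y 0) ≤ γ} (fun _ => (1 : ℝ)) y *
        (L γ y) ^ 2 * g γ y
    let ET2 : ℝ → ℝ := fun γ => ∫ y : Fin (n + 1) → ℝ,
      Set.indicator {y : Fin (n + 1) → ℝ | ∑ i, Real.exp (y i) ≤ γ} (fun _ => (1 : ℝ)) y *
        (L γ y) ^ 2 * g γ y
    let P1 : ℝ → ℝ := fun γ => ∫ y in {y : Fin (n + 1) → ℝ | Real.exp (y 0) ≤ γ}, g γ y
    let P2 : ℝ → ℝ := fun γ =>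
      ∫ y in {y : Fin (n + 1) → ℝ | ∑ i, Real.exp (y i) ≤ γ}, g γ y
    (∀ γ : ℝ, 0 < γ → P1 γ = 1 / 2) ∧
    ∃ C₁ : ℝ, 0 < C₁ ∧ ∀ᶠ γ in nhdsWithin (0 : ℝ) (Set.Ioi 0),
      (EZ2 γ - ET2 γ) / EZ2 γ ≤
        C₁ * Real.sqrt (Real.log (1 / γ)) * Real.sqrt (P1 γ - P2 γ) :=
  stmt10_general m S hS 0
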